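/- Let G be an ℓ-group, let I₁, …, Iₙ be finitely many ℓ-ideals of G, and let g₁, …, gₙ ∈ G be such that for all i, j ∈ {1, …, n} and every prime ℓ-ideal p of G containing both Iᵢ and Iⱼ one has gᵢ - gⱼ ∈ p. Then there exists g ∈ G such that g - gᵢ ∈ p for each i ∈ {1, …, n} and each prime ℓ-ideal p containing Iᵢ. (Patching Lemma: the spectral dual of Keimel's Chinese Remainder Theorem, with closed subsets of Spec G given as the sets of primes containing the ℓ-ideals Iᵢ.) -/

import Mathlib

/-- An ℓ-ideal of an ℓ-group `G`: an additive subgroup `I` such that `g ∈ I`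
whenever `|g| ≤ |h|` for some `h ∈ I`. -/
def IsLIdeal {G : Type*} [Lattice G] [AddCommGroup G]
    [CovariantClass G G (· + ·) (· ≤ ·)] (I : AddSubgroup G) : Prop :=
  ∀ ⦃g h : G⦄, h ∈ I → |g| ≤ |h| → g ∈ I

/-- The ℓ-ideal generated by a subset `S` of `G`: the smallest ℓ-ideal containing `S`. -/
def lIdealGen {G : Type*} [Lattice G] [AddCommGroup G]
    [CovariantClass G G (· + ·) (· ≤ ·)] (S : Set G) : AddSubgroup G :=
  sInf {I : AddSubgroup G | IsLIdeal I ∧ S ⊆ ↑I}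

/-- A prime ℓ-ideal: a proper ℓ-ideal `p` such that `a ⊓ b = 0` implies `a ∈ p` or `b ∈ p`. -/
def IsPrimeLIdeal {G : Type*} [Lattice G] [AddCommGroup G]
    [CovariantClass G G (· + ·) (· ≤ ·)] (p : AddSubgroup G) : Prop :=
  IsLIdeal p ∧ p ≠ ⊤ ∧ ∀ a b : G, a ⊓ b = 0 → a ∈ p ∨ b ∈ p

/-- A maximal ℓ-ideal: a proper ℓ-ideal maximal under inclusion among proper ℓ-ideals. -/
def IsMaximalLIdeal {G : Type*} [Lattice G] [AddCommGroup G]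
    [CovariantClass G G (· + ·) (· ≤ ·)] (m : AddSubgroup G) : Prop :=
  IsLIdeal m ∧ m ≠ ⊤ ∧ ∀ I : AddSubgroup G, IsLIdeal I → I ≠ ⊤ → m ≤ I → I = m

/-- A (strong order) unit of `G`. -/
def IsStrongUnit {G : Type*} [Lattice G] [AddCommGroup G]
    [CovariantClass G G (· + ·) (· ≤ ·)] (u : G) : Prop :=
  0 ≤ u ∧ ∀ g : G, ∃ n : ℕ, g ≤ n • u

/-- `G` is strongly semisimple: for every `h ∈ G`, the intersection of all maximal
ℓ-ideals containing `h` equals the principal ℓ-ideal generated by `h`. -/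
def IsStronglySemisimple (G : Type*) [Lattice G] [AddCommGroup G]
    [CovariantClass G G (· + ·) (· ≤ ·)] : Prop :=
  ∀ h : G, sInf {m : AddSubgroup G | IsMaximalLIdeal m ∧ h ∈ m} = lIdealGen {h}

/-!
The ℓ-ideals of `G` form a distributive lattice. As for ideals of an arithmetical ring,
distributivity gives a Chinese Remainder Theorem: congruences `x ≡ gᵢ mod Iᵢ` are simultaneously
solvable as soon as `gᵢ - gⱼ ∈ Iᵢ + Iⱼ` for all `i`, `j`. Distributivity also shows that an ℓ-ideal
maximal among those avoiding a given element is prime, so every ℓ-ideal is the intersection of the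
primes above it. Hence `gᵢ - gⱼ` lies in `Iᵢ + Iⱼ` once it lies in every prime containing both
`Iᵢ` and `Iⱼ`.
-/

section LGroup

variable {G : Type*} [Lattice G] [AddCommGroup G] [CovariantClass G G (· + ·) (· ≤ ·)]

theorem exists_add_eq_of_abs_le_add {x a b : G} (ha : 0 ≤ a) (hb : 0 ≤ b) (h : |x| ≤ a + b) :
    ∃ y z, y + z = x ∧ |y| ≤ a ∧ |z| ≤ b := by
  obtain ⟨hx, hx'⟩ := abs_le'.1 h
  -- `y` is `x` truncated to the interval `[-a, a]`.
  refine ⟨(x ⊓ a) ⊔ -a, x - ((x ⊓ a) ⊔ -a), add_sub_cancel _ _, abs_le'.2 ⟨?_, ?_⟩,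
    abs_le'.2 ⟨?_, ?_⟩⟩
  · exact sup_le inf_le_right (neg_le_self ha)
  · exact neg_le.1 le_sup_right
  · have : x - b ≤ x ⊓ a := le_inf (sub_le_self x hb) (sub_le_iff_le_add.2 hx)
    exact sub_le_comm.1 (le_sup_of_le_left this)
  · have : -a ≤ x + b := neg_le.1 (by rwa [neg_add', sub_le_iff_le_add])
    rw [neg_sub, sub_le_iff_le_add']
    exact sup_le (inf_le_left.trans (le_add_of_nonneg_right hb)) this

theorem add_inf_le_inf_add_inf {a b c : G} (ha : 0 ≤ a) (hb : 0 ≤ b) (hc : 0 ≤ c) :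
    (a + b) ⊓ c ≤ a ⊓ c + b ⊓ c := by
  rw [inf_add, add_inf, add_inf]
  exact le_inf (inf_le_inf_left _ (le_add_of_nonneg_left ha))
    (inf_le_right.trans (le_inf (le_add_of_nonneg_right hb) (le_add_of_nonneg_right hc)))

theorem IsLIdeal.abs_mem {I : AddSubgroup G} (hI : IsLIdeal I) {x : G} (hx : x ∈ I) : |x| ∈ I :=
  hI hx (abs_abs x).le

theorem isLIdeal_sInf {S : Set (AddSubgroup G)} (hS : ∀ I ∈ S, IsLIdeal I) : IsLIdeal (sInf S) := by
  intro g h hh hgh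
  rw [AddSubgroup.mem_sInf] at hh ⊢
  exact fun I hI => hS I hI (hh I hI) hgh

theorem isLIdeal_biInf {ι : Type*} (s : Finset ι) {K : ι → AddSubgroup G}
    (hK : ∀ i ∈ s, IsLIdeal (K i)) : IsLIdeal (⨅ i ∈ s, K i) := by
  rw [← Finset.inf_eq_iInf, Finset.inf_eq_sInf_image]
  exact isLIdeal_sInf (Set.forall_mem_image.2 hK)

theorem IsLIdeal.inf {I J : AddSubgroup G} (hI : IsLIdeal I) (hJ : IsLIdeal J) :
    IsLIdeal (I ⊓ J) :=
  fun _ _ hh hgh => ⟨hI hh.1 hgh, hJ hh.2 hgh⟩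

theorem isLIdeal_sSup_of_directedOn {S : Set (AddSubgroup G)} (hne : S.Nonempty)
    (hdir : DirectedOn (· ≤ ·) S) (hS : ∀ I ∈ S, IsLIdeal I) : IsLIdeal (sSup S) := by
  intro g h hh hgh
  rw [AddSubgroup.mem_sSup_of_directedOn hne hdir] at hh ⊢
  obtain ⟨I, hI, hhI⟩ := hh
  exact ⟨I, hI, hS I hI hhI hgh⟩

theorem IsLIdeal.mem_sup_iff {I J : AddSubgroup G} (hI : IsLIdeal I) (hJ : IsLIdeal J) {x : G} :
    x ∈ I ⊔ J ↔ ∃ a ∈ I, ∃ b ∈ J, |x| ≤ |a| + |b| := by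
  constructor
  · intro hx
    obtain ⟨a, ha, b, hb, rfl⟩ := AddSubgroup.mem_sup.1 hx
    exact ⟨a, ha, b, hb, abs_add_le a b⟩
  · rintro ⟨a, ha, b, hb, h⟩
    obtain ⟨y, z, rfl, hy, hz⟩ := exists_add_eq_of_abs_le_add (abs_nonneg a) (abs_nonneg b) h
    exact AddSubgroup.add_mem_sup (hI ha hy) (hJ hb hz)

theorem IsLIdeal.sup {I J : AddSubgroup G} (hI : IsLIdeal I) (hJ : IsLIdeal J) :
    IsLIdeal (I ⊔ J) := by
  intro g h hh hgh
  rw [hI.mem_sup_iff hJ] at hh ⊢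
  obtain ⟨a, ha, b, hb, hab⟩ := hh
  exact ⟨a, ha, b, hb, hgh.trans hab⟩

theorem IsLIdeal.sup_inf_distrib {I J K : AddSubgroup G} (hI : IsLIdeal I) (hJ : IsLIdeal J)
    (hK : IsLIdeal K) : I ⊔ J ⊓ K = (I ⊔ J) ⊓ (I ⊔ K) := by
  refine le_antisymm sup_inf_le ?_
  rintro x ⟨hxJ, hxK⟩
  obtain ⟨a, ha, b, hb, hab⟩ := (hI.mem_sup_iff hJ).1 hxJ
  obtain ⟨c, hc, d, hd, hcd⟩ := (hI.mem_sup_iff hK).1 hxK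
  have hac : |(|a| + |c|)| = |a| + |c| := abs_of_nonneg (add_nonneg (abs_nonneg a) (abs_nonneg c))
  have hbd : |(|b| ⊓ |d|)| = |b| ⊓ |d| := abs_of_nonneg (le_inf (abs_nonneg b) (abs_nonneg d))
  refine (hI.mem_sup_iff (hJ.inf hK)).2 ⟨|a| + |c|, I.add_mem (hI.abs_mem ha) (hI.abs_mem hc),
    |b| ⊓ |d|, ⟨hJ hb (hbd.trans_le inf_le_left), hK hd (hbd.trans_le inf_le_right)⟩, ?_⟩
  rw [hac, hbd, add_inf]
  refine le_inf (hab.trans ?_) (hcd.trans ?_)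
  · gcongr
    exact le_add_of_nonneg_right (abs_nonneg c)
  · gcongr
    exact le_add_of_nonneg_left (abs_nonneg a)

theorem IsLIdeal.sup_biInf {ι : Type*} {I : AddSubgroup G} (hI : IsLIdeal I) (s : Finset ι)
    {K : ι → AddSubgroup G} (hK : ∀ i ∈ s, IsLIdeal (K i)) :
    I ⊔ ⨅ i ∈ s, K i = ⨅ i ∈ s, I ⊔ K i := by
  classical
  induction s using Finset.induction_on with
  | empty => simp
  | insert j s _ ih =>
    rw [Finset.forall_mem_insert] at hK
    rw [Finset.iInf_insert, Finset.iInf_insert,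
      hI.sup_inf_distrib hK.1 (isLIdeal_biInf s hK.2), ih hK.2]

theorem exists_forall_sub_mem_of_sub_mem_sup {ι : Type*} (s : Finset ι) {I : ι → AddSubgroup G}
    (hI : ∀ i ∈ s, IsLIdeal (I i)) (g : ι → G)
    (hg : ∀ i ∈ s, ∀ j ∈ s, g i - g j ∈ I i ⊔ I j) : ∃ x, ∀ i ∈ s, x - g i ∈ I i := by
  classical
  induction s using Finset.induction_on with
  | empty => exact ⟨0, by simp⟩
  | insert j s _ ih =>
    rw [Finset.forall_mem_insert] at hI
    obtain ⟨x, hx⟩ := ih hI.2 fun i hi k hk =>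
      hg i (Finset.mem_insert_of_mem hi) k (Finset.mem_insert_of_mem hk)
    have hxj : ∀ i ∈ s, x - g j ∈ I j ⊔ I i := fun i hi => by
      rw [← sub_add_sub_cancel x (g i) (g j), sup_comm]
      exact add_mem (AddSubgroup.mem_sup_left (hx i hi))
        (hg i (Finset.mem_insert_of_mem hi) j (Finset.mem_insert_self j s))
    have hxs : x - g j ∈ I j ⊔ ⨅ i ∈ s, I i := by
      simpa only [hI.1.sup_biInf s hI.2, AddSubgroup.mem_iInf] using hxj
    obtain ⟨a, ha, b, hb, hab⟩ := AddSubgroup.mem_sup.1 hxs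
    simp only [AddSubgroup.mem_iInf] at hb
    refine ⟨x - b, (Finset.forall_mem_insert _ _ _).2 ⟨?_, fun i hi => ?_⟩⟩
    · rwa [sub_right_comm, ← hab, add_sub_cancel_right]
    · rw [sub_right_comm]
      exact sub_mem (hx i hi) (hb i hi)

theorem isLIdeal_lIdealGen (S : Set G) : IsLIdeal (lIdealGen S) :=
  isLIdeal_sInf fun _ hI => hI.1

theorem subset_lIdealGen (S : Set G) : S ⊆ lIdealGen S := fun _ hx =>
  AddSubgroup.mem_sInf.2 fun _ hI => hI.2 hx

theorem lIdealGen_le {S : Set G} {I : AddSubgroup G} (hI : IsLIdeal I) (hS : S ⊆ I) :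
    lIdealGen S ≤ I :=
  sInf_le ⟨hI, hS⟩

/-- The polar `b^⊥` of `b`: the elements `x` disjoint from `b`, that is, `|x| ⊓ |b| = 0`. Polars
serve to show that disjoint elements generate ℓ-ideals with trivial intersection. -/
def lPolar (b : G) : AddSubgroup G where
  carrier := {x | |x| ⊓ |b| = 0}
  zero_mem' := by simp
  neg_mem' := by simp
  add_mem' {x y} hx hy := by
    refine le_antisymm ?_ (le_inf (abs_nonneg _) (abs_nonneg b))
    calc |x + y| ⊓ |b| ≤ (|x| + |y|) ⊓ |b| := inf_le_inf_right _ (abs_add_le x y)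
      _ ≤ |x| ⊓ |b| + |y| ⊓ |b| :=
        add_inf_le_inf_add_inf (abs_nonneg x) (abs_nonneg y) (abs_nonneg b)
      _ = 0 := by rw [hx, hy, add_zero]

theorem mem_lPolar {x b : G} : x ∈ lPolar b ↔ |x| ⊓ |b| = 0 :=
  Iff.rfl

theorem mem_lPolar_comm {x b : G} : x ∈ lPolar b ↔ b ∈ lPolar x := by
  rw [mem_lPolar, mem_lPolar, inf_comm]

theorem mem_lPolar_of_inf_eq_zero {a b : G} (h : a ⊓ b = 0) : a ∈ lPolar b := by
  rwa [mem_lPolar, abs_of_nonneg (h.symm.trans_le inf_le_left),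
    abs_of_nonneg (h.symm.trans_le inf_le_right)]

theorem isLIdeal_lPolar (b : G) : IsLIdeal (lPolar b) := fun g _ hh hgh =>
  le_antisymm ((inf_le_inf_right _ hgh).trans hh.le) (le_inf (abs_nonneg g) (abs_nonneg b))

theorem eq_zero_of_mem_lPolar_self {x : G} (hx : x ∈ lPolar x) : x = 0 := by
  rw [mem_lPolar, inf_idem] at hx
  exact le_antisymm (hx ▸ le_abs_self x) (neg_nonpos.1 (hx ▸ neg_le_abs x))

theorem lIdealGen_singleton_inf_eq_bot {a b : G} (h : a ∈ lPolar b) :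
    lIdealGen {a} ⊓ lIdealGen {b} = ⊥ := by
  refine eq_bot_iff.2 ?_
  rintro x ⟨hxa, hxb⟩
  have hx_perp_b : x ∈ lPolar b :=
    lIdealGen_le (isLIdeal_lPolar b) (Set.singleton_subset_iff.2 h) hxa
  have hx_perp_x : x ∈ lPolar x := lIdealGen_le (isLIdeal_lPolar x)
    (Set.singleton_subset_iff.2 (mem_lPolar_comm.1 hx_perp_b)) hxb
  exact eq_zero_of_mem_lPolar_self hx_perp_x

theorem isPrimeLIdeal_of_maximal_notMem {x : G} {p : AddSubgroup G}
    (hp : Maximal (fun K => IsLIdeal K ∧ x ∉ K) p) : IsPrimeLIdeal p := by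
  obtain ⟨hpI, hxp⟩ := hp.prop
  have hx_sup : ∀ a ∉ p, x ∈ p ⊔ lIdealGen {a} := by
    intro a ha
    by_contra hx
    have hle := hp.le_of_ge ⟨hpI.sup (isLIdeal_lIdealGen {a}), hx⟩ le_sup_left
    exact ha (hle (AddSubgroup.mem_sup_right (subset_lIdealGen {a} rfl)))
  refine ⟨hpI, fun h => hxp (h ▸ AddSubgroup.mem_top x), fun a b hab => ?_⟩
  by_contra! ⟨ha, hb⟩
  apply hxp
  rw [← sup_bot_eq p, ← lIdealGen_singleton_inf_eq_bot (mem_lPolar_of_inf_eq_zero hab),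
    hpI.sup_inf_distrib (isLIdeal_lIdealGen {a}) (isLIdeal_lIdealGen {b})]
  exact ⟨hx_sup a ha, hx_sup b hb⟩

theorem IsLIdeal.exists_le_maximal_notMem {I : AddSubgroup G} (hI : IsLIdeal I) {x : G}
    (hx : x ∉ I) : ∃ p, I ≤ p ∧ Maximal (fun K => IsLIdeal K ∧ x ∉ K) p := by
  refine zorn_le_nonempty₀ {K | IsLIdeal K ∧ x ∉ K} (fun c hc hchain K hK => ?_) I ⟨hI, hx⟩
  have hne : c.Nonempty := ⟨K, hK⟩
  have hdir := hchain.directedOn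
  refine ⟨sSup c, ⟨isLIdeal_sSup_of_directedOn hne hdir fun J hJ => (hc hJ).1, fun hxc => ?_⟩,
    fun J hJ => le_sSup hJ⟩
  obtain ⟨J, hJ, hxJ⟩ := (AddSubgroup.mem_sSup_of_directedOn hne hdir).1 hxc
  exact (hc hJ).2 hxJ

theorem IsLIdeal.mem_of_forall_isPrimeLIdeal {I : AddSubgroup G} (hI : IsLIdeal I) {x : G}
    (h : ∀ p, IsPrimeLIdeal p → I ≤ p → x ∈ p) : x ∈ I := by
  by_contra hx
  obtain ⟨p, hIp, hp⟩ := hI.exists_le_maximal_notMem hx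
  exact hp.prop.2 (h p (isPrimeLIdeal_of_maximal_notMem hp) hIp)

theorem patching_lemma_general {ι : Type*} [Finite ι] (S : ι → Set G) (g : ι → G)
    (hcomp : ∀ i j, ∀ p : AddSubgroup G, IsPrimeLIdeal p → S i ⊆ p → S j ⊆ p → g i - g j ∈ p) :
    ∃ g' : G, ∀ i, ∀ p : AddSubgroup G, IsPrimeLIdeal p → S i ⊆ p → g' - g i ∈ p := by
  cases nonempty_fintype ι
  have hgen : ∀ i, IsLIdeal (lIdealGen (S i)) := fun i => isLIdeal_lIdealGen (S i)
  have hsup : ∀ i j, g i - g j ∈ lIdealGen (S i) ⊔ lIdealGen (S j) := fun i j =>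
    ((hgen i).sup (hgen j)).mem_of_forall_isPrimeLIdeal fun p hp hle =>
      hcomp i j p hp ((subset_lIdealGen (S i)).trans (le_sup_left.trans hle : lIdealGen (S i) ≤ p))
        ((subset_lIdealGen (S j)).trans (le_sup_right.trans hle : lIdealGen (S j) ≤ p))
  obtain ⟨g', hg'⟩ := exists_forall_sub_mem_of_sub_mem_sup Finset.univ (fun i _ => hgen i) g
    fun i _ j _ => hsup i j
  exact ⟨g', fun i p hp hS => lIdealGen_le hp.1 hS (hg' i (Finset.mem_univ i))⟩

end LGroup

/-- **Patching Lemma**: the spectral dual of Keimel's Chinese Remainder Theorem,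
with closed subsets of `Spec G` given as sets of primes containing the ℓ-ideals `I i`. -/
theorem patching_lemma {G : Type*} [Lattice G] [AddCommGroup G]
    [CovariantClass G G (· + ·) (· ≤ ·)] {n : ℕ}
    (I : Fin n → AddSubgroup G) (hI : ∀ i, IsLIdeal (I i)) (g : Fin n → G)
    (hcomp : ∀ i j, ∀ p : AddSubgroup G, IsPrimeLIdeal p →
      I i ≤ p → I j ≤ p → g i - g j ∈ p) :
    ∃ g' : G, ∀ i, ∀ p : AddSubgroup G, IsPrimeLIdeal p → I i ≤ p → g' - g i ∈ p :=
  patching_lemma_general (fun i => (I i : Set G)) g hcomp
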